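/- Let M be a maximum matching in G. Then M is a popular max-matching if and only if (1) there is no alternating cycle C with respect to M such that wt_M(C) > 0, and (2) there is no alternating path p with respect to M having an endpoint that is unmatched in M such that wt_M(p) > 0. -/

import Mathlib

open Classical

noncomputable section

namespace PopMax

/-- A bipartite preference instance `G = (A ∪ B, E)`:
`E a b` says there is an edge between `a ∈ A` and `b ∈ B`;
`prefA a b b'` says `a` strictly prefers `b` to `b'`;
`prefB b a a'` says `b` strictly prefers `a` to `a'`. -/
structure PrefSys (A : Type*) (B : Type*) where
  E : A → B → Prop
  prefA : A → B → B → Prop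
  prefB : B → A → A → Prop

/-- Every node has a strict (linear) preference order over its neighbors. -/
def PrefSys.IsValid {A B : Type*} (I : PrefSys A B) : Prop :=
  (∀ a b, ¬ I.prefA a b b) ∧
  (∀ a b₁ b₂ b₃, I.prefA a b₁ b₂ → I.prefA a b₂ b₃ → I.prefA a b₁ b₃) ∧
  (∀ a b₁ b₂, I.E a b₁ → I.E a b₂ → b₁ ≠ b₂ → I.prefA a b₁ b₂ ∨ I.prefA a b₂ b₁) ∧
  (∀ b a, ¬ I.prefB b a a) ∧
  (∀ b a₁ a₂ a₃, I.prefB b a₁ a₂ → I.prefB b a₂ a₃ → I.prefB b a₁ a₃) ∧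
  (∀ b a₁ a₂, I.E a₁ b → I.E a₂ b → a₁ ≠ a₂ → I.prefB b a₁ a₂ ∨ I.prefB b a₂ a₁)

variable {A B : Type*}

/-- A matching: a set of pairwise disjoint edges. -/
def IsMatching (I : PrefSys A B) (M : Finset (A × B)) : Prop :=
  (∀ p ∈ M, I.E p.1 p.2) ∧
  (∀ p ∈ M, ∀ q ∈ M, p.1 = q.1 → p = q) ∧
  (∀ p ∈ M, ∀ q ∈ M, p.2 = q.2 → p = q)

def matchedA (M : Finset (A × B)) (a : A) : Prop := ∃ b, (a, b) ∈ M
def matchedB (M : Finset (A × B)) (b : B) : Prop := ∃ a, (a, b) ∈ M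

/-- A maximum matching: a matching of maximum cardinality. -/
def IsMaximumMatching (I : PrefSys A B) (M : Finset (A × B)) : Prop :=
  IsMatching I M ∧ ∀ N : Finset (A × B), IsMatching I N → N.card ≤ M.card

/-- A perfect matching matches all nodes. -/
def IsPerfectMatching (I : PrefSys A B) (M : Finset (A × B)) : Prop :=
  IsMatching I M ∧ (∀ a, matchedA M a) ∧ (∀ b, matchedB M b)

/-- `a ∈ A` prefers matching `M` to matching `N`. -/
def prefersA (I : PrefSys A B) (a : A) (M N : Finset (A × B)) : Prop :=
  ∃ b, (a, b) ∈ M ∧ (¬ matchedA N a ∨ ∃ b', (a, b') ∈ N ∧ I.prefA a b b')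

/-- `b ∈ B` prefers matching `M` to matching `N`. -/
def prefersB (I : PrefSys A B) (b : B) (M N : Finset (A × B)) : Prop :=
  ∃ a, (a, b) ∈ M ∧ (¬ matchedB N b ∨ ∃ a', (a', b) ∈ N ∧ I.prefB b a a')

/-- A node `u ∈ A ∪ B` prefers matching `M` to matching `N`. -/
def prefers (I : PrefSys A B) (u : A ⊕ B) (M N : Finset (A × B)) : Prop :=
  match u with
  | Sum.inl a => prefersA I a M N
  | Sum.inr b => prefersB I b M N

/-- `φ(M,N)`: the number of nodes preferring `M` to `N`. -/
def phi [Fintype A] [Fintype B] (I : PrefSys A B) (M N : Finset (A × B)) : ℕ :=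
  (Finset.univ.filter (fun u : A ⊕ B => prefers I u M N)).card

/-- `Δ(M,N) = φ(M,N) − φ(N,M)`. -/
def Delta [Fintype A] [Fintype B] (I : PrefSys A B) (M N : Finset (A × B)) : ℤ :=
  (phi I M N : ℤ) - (phi I N M : ℤ)

/-- A popular max-matching: a maximum matching `M` with `Δ(M,N) ≥ 0`
for every maximum matching `N`. -/
def IsPopularMaxMatching [Fintype A] [Fintype B] (I : PrefSys A B)
    (M : Finset (A × B)) : Prop :=
  IsMaximumMatching I M ∧
    ∀ N : Finset (A × B), IsMaximumMatching I N → 0 ≤ Delta I M N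

/-- The edge `(a,b) ∉ M` blocks `M`. -/
def Blocks (I : PrefSys A B) (M : Finset (A × B)) (a : A) (b : B) : Prop :=
  I.E a b ∧ (a, b) ∉ M ∧
  (¬ matchedA M a ∨ ∃ b', (a, b') ∈ M ∧ I.prefA a b b') ∧
  (¬ matchedB M b ∨ ∃ a', (a', b) ∈ M ∧ I.prefB b a a')

/-- A stable matching: a matching with no blocking edge. -/
def IsStable (I : PrefSys A B) (S : Finset (A × B)) : Prop :=
  IsMatching I S ∧ ∀ a b, ¬ Blocks I S a b

/-- The edge weight `wt_M(a,b) ∈ {0, ±2}`. -/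
def wt (I : PrefSys A B) (M : Finset (A × B)) (a : A) (b : B) : ℤ :=
  if Blocks I M a b then 2
  else if (∃ b', (a, b') ∈ M ∧ I.prefA a b' b) ∧ (∃ a', (a', b) ∈ M ∧ I.prefB b a' a) then -2
  else 0

/-- The underlying simple graph on the node set `A ⊕ B`. -/
def graphOf (I : PrefSys A B) : SimpleGraph (A ⊕ B) :=
  SimpleGraph.fromRel (fun u w =>
    match u, w with
    | Sum.inl a, Sum.inr b => I.E a b
    | _, _ => False)

/-- The (undirected) edge `e` is an edge of the matching `M`. -/
def edgeInM (M : Finset (A × B)) (e : Sym2 (A ⊕ B)) : Prop :=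
  ∃ a b, (a, b) ∈ M ∧ e = s(Sum.inl a, Sum.inr b)

/-- Consecutive edges alternate between `M` and `E ∖ M`. -/
def altRel (M : Finset (A × B)) (e f : Sym2 (A ⊕ B)) : Prop :=
  edgeInM M e ↔ ¬ edgeInM M f

/-- An alternating path with respect to `M`. -/
def IsAltPath (I : PrefSys A B) (M : Finset (A × B)) {u w : A ⊕ B}
    (p : (graphOf I).Walk u w) : Prop :=
  p.IsPath ∧ List.Chain' (altRel M) p.edges

/-- An alternating cycle with respect to `M` (alternation also across the wrap-around). -/
def IsAltCycle (I : PrefSys A B) (M : Finset (A × B)) {w : A ⊕ B}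
    (c : (graphOf I).Walk w w) : Prop :=
  c.IsCycle ∧ List.Chain' (altRel M) (c.edges ++ c.edges.take 1)

/-- `wt_M` as a function on undirected edges. -/
def wtSym (I : PrefSys A B) (M : Finset (A × B)) : Sym2 (A ⊕ B) → ℤ :=
  Sym2.lift ⟨fun u w =>
      match u, w with
      | Sum.inl a, Sum.inr b => wt I M a b
      | Sum.inr b, Sum.inl a => wt I M a b
      | _, _ => 0,
    by rintro (a | b) (a' | b') <;> rfl⟩

/-- `wt_M(ρ) = Σ_{e ∈ ρ} wt_M(e)` for a walk `ρ`. -/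
def wtWalk (I : PrefSys A B) (M : Finset (A × B)) {u w : A ⊕ B}
    (p : (graphOf I).Walk u w) : ℤ :=
  (p.edges.map (wtSym I M)).sum

/-- The node `u ∈ A ∪ B` is unmatched in `M`. -/
def unmatchedNode (M : Finset (A × B)) : A ⊕ B → Prop
  | Sum.inl a => ¬ matchedA M a
  | Sum.inr b => ¬ matchedB M b

/-- The set of edges `(a,b) ∈ A × B` used by the walk `p`. -/
def pairsOf [Fintype A] [Fintype B] (I : PrefSys A B) {u w : A ⊕ B}
    (p : (graphOf I).Walk u w) : Finset (A × B) :=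
  Finset.univ.filter (fun ab : A × B => s(Sum.inl ab.1, Sum.inr ab.2) ∈ p.edges)

/-- `M` is Pareto-optimal: no matching `N` has `φ(N,M) > 0` and `φ(M,N) = 0`. -/
def IsParetoOptimal [Fintype A] [Fintype B] (I : PrefSys A B) (M : Finset (A × B)) : Prop :=
  ¬ ∃ N : Finset (A × B), IsMatching I N ∧ 0 < phi I N M ∧ phi I M N = 0

/-! ### The auxiliary instance `G*` -/

/-- `A* = {a_0, …, a_{n0−1} : a ∈ A}` where `n0 = |A|`. -/
abbrev AStar (A : Type*) [Fintype A] : Type _ := A × Fin (Fintype.card A)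

/-- `B* = B̃ ∪ {d_1(a), …, d_{n0−1}(a) : a ∈ A}`; the dummy node `(a, j)`
(with `j : Fin (n0 − 1)`) stands for `d_{j+1}(a)`. -/
abbrev BStar (A : Type*) (B : Type*) [Fintype A] : Type _ :=
  B ⊕ (A × Fin (Fintype.card A - 1))

/-- The auxiliary instance `G*` with its edges and preferences. -/
def starSys [Fintype A] (I : PrefSys A B) : PrefSys (AStar A) (BStar A B) where
  E := fun ai w =>
    match ai, w with
    | (a, _i), Sum.inl b => I.E a b
    | (a, i), Sum.inr (a', j) => a = a' ∧ ((i : ℕ) = (j : ℕ) ∨ (i : ℕ) = (j : ℕ) + 1)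
  prefA := fun ai u v =>
    match ai, u, v with
    | (a, _i), Sum.inl b, Sum.inl b' => I.prefA a b b'
    | (a, i), Sum.inl _b, Sum.inr (a', j) => a = a' ∧ (j : ℕ) = (i : ℕ)
    | (a, i), Sum.inr (a', j), Sum.inl _b => a = a' ∧ (j : ℕ) + 1 = (i : ℕ)
    | (a, i), Sum.inr (a', j), Sum.inr (a'', j') =>
        a = a' ∧ a = a'' ∧ (j : ℕ) + 1 = (i : ℕ) ∧ (j' : ℕ) = (i : ℕ)
  prefB := fun w x y =>
    match w, x, y with
    | Sum.inl b, (a, i), (a', i') =>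
        (i' : ℕ) < (i : ℕ) ∨ ((i : ℕ) = (i' : ℕ) ∧ I.prefB b a a')
    | Sum.inr (a, j), (a', i), (a'', i') =>
        a' = a ∧ a'' = a ∧ (i : ℕ) = (j : ℕ) ∧ (i' : ℕ) = (j : ℕ) + 1

/-- The projection `S ↦ S'`: delete edges incident to dummy nodes and replace
`(a_i, b̃)` by `(a, b)`. -/
def proj [Fintype A] [Fintype B] (S : Finset (AStar A × BStar A B)) : Finset (A × B) :=
  Finset.univ.filter (fun ab : A × B =>
    ∃ i : Fin (Fintype.card A), ((ab.1, i), (Sum.inl ab.2 : BStar A B)) ∈ S)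

/-- `a ∈ A_i` for the level partition of `A` induced by a (stable) matching `S` in `G*`:
for `i ≤ n0 − 2`, `a ∈ A_i` iff `(a_i, b̃) ∈ S` for some `b̃ ∈ B̃`;
`A_{n0−1}` consists of all remaining nodes of `A`. -/
def AtLevelA [Fintype A] (S : Finset (AStar A × BStar A B)) (a : A) (i : ℕ) : Prop :=
  (i + 1 < Fintype.card A ∧
     ∃ j : Fin (Fintype.card A), (j : ℕ) = i ∧
       ∃ b : B, ((a, j), (Sum.inl b : BStar A B)) ∈ S) ∨
  (i + 1 = Fintype.card A ∧
     ∀ j : Fin (Fintype.card A), (j : ℕ) + 1 < Fintype.card A →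
       ∀ b : B, ((a, j), (Sum.inl b : BStar A B)) ∉ S)

/-- `b ∈ B_i` for the level partition of `B` induced by a (stable) matching `S` in `G*`:
for `1 ≤ i ≤ n0 − 1`, `b ∈ B_i` iff `(a_i, b̃) ∈ S` for some `a ∈ A_i`;
`B_0` consists of all remaining nodes of `B`. -/
def AtLevelB [Fintype A] (S : Finset (AStar A × BStar A B)) (b : B) (i : ℕ) : Prop :=
  (1 ≤ i ∧ i < Fintype.card A ∧
     ∃ j : Fin (Fintype.card A), (j : ℕ) = i ∧
       ∃ a : A, AtLevelA S a i ∧ ((a, j), (Sum.inl b : BStar A B)) ∈ S) ∨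
  (i = 0 ∧ ∀ j : Fin (Fintype.card A), 1 ≤ (j : ℕ) →
       ∀ a : A, AtLevelA S a (j : ℕ) → ((a, j), (Sum.inl b : BStar A B)) ∉ S)

/-!
Let the nodes vote between `M` and `N`. The two ends of an edge of `N` contribute `-wt_M` together,
and the nodes unmatched in `N` contribute the number of them that `M` matches, so
`Δ(M, N) = #(nodes deserted by N) - wt_M(N)`.

If `M` is popular, exchange `M` along an alternating cycle, or along an alternating path with an
unmatched end. At most one node becomes deserted, so by parity the new matching is again maximum.
Hence the weight of the cycle or path is at most `1`, and weights are even.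

Conversely, let `N` be a maximum matching. A component of `M ∪ N` with a node unmatched in `M` also
has one unmatched in `N`, as otherwise switching to `N` there would enlarge `M`; so it is a path
with an end unmatched in `M`. Every other component is a shared edge, of weight `0`, or an
alternating cycle. The weight of `N` is the sum of the weights of these components.
-/

section Walks

open SimpleGraph

variable {V : Type*} {G : SimpleGraph V} {u v x : V} {R : Sym2 V → Sym2 V → Prop}

/-- `R` relates any two distinct edges of `F` that share an endpoint. For the edge set of a path or
a cycle this says that `R` relates consecutive edges, without reference to a traversal. -/
def IncidentPairwise (R : Sym2 V → Sym2 V → Prop) (F : Set (Sym2 V)) : Prop :=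
  F.Pairwise fun e f => ∀ x ∈ e, x ∈ f → R e f

theorem IncidentPairwise.mono {F F' : Set (Sym2 V)} (h : IncidentPairwise R F') (hF : F ⊆ F') :
    IncidentPairwise R F :=
  Set.Pairwise.mono hF h

theorem IncidentPairwise.insert {F : Set (Sym2 V)} [Std.Symm R] (h : IncidentPairwise R F)
    {e : Sym2 V} (he : ∀ f ∈ F, ∀ x ∈ e, x ∈ f → R e f) : IncidentPairwise R (insert e F) :=
  Set.Pairwise.insert h fun f hf _ => ⟨he f hf, fun x hxf hxe => symm_of R (he f hf x hxe hxf)⟩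

theorem head?_edges_eq_some {p : G.Walk u v} (hp : p.IsPath) {e : Sym2 V} (he : e ∈ p.edges)
    (hu : u ∈ e) : p.edges.head? = some e := by
  cases p with
  | nil => simp at he
  | cons h q =>
    obtain ⟨-, hq⟩ := Walk.cons_isPath_iff _ _ |>.1 hp
    rcases List.mem_cons.1 he with rfl | he
    · rfl
    · exact absurd (q.mem_support_of_mem_edges he hu) hq

theorem getLast?_edges_eq_some {p : G.Walk u v} (hp : p.IsPath) {e : Sym2 V} (he : e ∈ p.edges)
    (hv : v ∈ e) : p.edges.getLast? = some e := by
  have h := head?_edges_eq_some hp.reverse (by simpa using he) hv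
  rwa [Walk.edges_reverse, List.head?_reverse] at h

theorem start_mem_of_head?_edges {p : G.Walk u v} {e : Sym2 V} (he : p.edges.head? = some e) :
    u ∈ e := by
  cases p with
  | nil => simp at he
  | cons h q =>
    obtain rfl : s(u, _) = e := by simpa using he
    exact Sym2.mem_mk_left _ _

theorem end_mem_of_getLast?_edges {p : G.Walk u v} {e : Sym2 V}
    (he : p.edges.getLast? = some e) : v ∈ e :=
  start_mem_of_head?_edges (p := p.reverse) (by rwa [Walk.edges_reverse, List.head?_reverse])

theorem incidentPairwise_edges_of_isPath [Std.Symm R] {p : G.Walk u v} (hp : p.IsPath)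
    (h : p.edges.IsChain R) : IncidentPairwise R {e | e ∈ p.edges} := by
  induction p with
  | nil => simp [IncidentPairwise]
  | @cons u v w huv q ih =>
    obtain ⟨hq, hu⟩ := Walk.cons_isPath_iff _ _ |>.1 hp
    rw [Walk.edges_cons, List.isChain_cons] at h
    have hset : {e | e ∈ (Walk.cons huv q).edges} = insert s(u, v) {e | e ∈ q.edges} := by
      ext; simp
    rw [hset]
    refine (ih hq h.2).insert fun f hf x hx hxf => ?_
    rcases Sym2.mem_iff.1 hx with rfl | rfl
    · exact absurd (q.mem_support_of_mem_edges hf hxf) hu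
    · exact h.1 f (head?_edges_eq_some hq hf hxf)

theorem incidentPairwise_edges_of_isCycle [Std.Symm R] {c : G.Walk u u} (hc : c.IsCycle)
    (h : (c.edges ++ c.edges.take 1).IsChain R) : IncidentPairwise R {e | e ∈ c.edges} := by
  cases c with
  | nil => exact absurd rfl hc.ne_nil
  | @cons _ v _ huv q =>
    have hq : q.IsPath := (Walk.cons_isCycle_iff q huv).1 hc |>.1
    have hset : {e | e ∈ (Walk.cons huv q).edges} = insert s(u, v) {e | e ∈ q.edges} := by
      ext; simp
    rw [Walk.edges_cons, List.take_succ_cons, List.take_zero, List.cons_append, List.isChain_cons,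
      List.isChain_append] at h
    obtain ⟨hhead, hchain, -, hlast⟩ := h
    rw [hset]
    refine (incidentPairwise_edges_of_isPath hq hchain).insert fun f hf x hx hxf => ?_
    rcases Sym2.mem_iff.1 hx with rfl | rfl
    · exact symm_of R (hlast f (getLast?_edges_eq_some hq hf hxf) _ rfl)
    · refine hhead f ?_
      rw [List.head?_append, head?_edges_eq_some hq hf hxf, Option.some_or, Option.mem_some]

theorem isChain_edges_of_isTrail {p : G.Walk u v} (hp : p.IsTrail)
    (h : IncidentPairwise R {e | e ∈ p.edges}) : p.edges.IsChain R := by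
  induction p with
  | nil => simp
  | @cons u v w huv q ih =>
    obtain ⟨hq, he⟩ := Walk.isTrail_cons huv q |>.1 hp
    refine List.isChain_cons.2 ⟨fun f hf => ?_, ih hq (h.mono fun e he => by simp_all)⟩
    cases q with
    | nil => simp at hf
    | cons hvx r =>
      obtain rfl : s(v, _) = f := by simpa using hf
      exact h (by simp) (by simp) (ne_of_mem_of_not_mem (by simp) he).symm v (by simp) (by simp)

theorem isChain_edges_append_take_one {c : G.Walk u u} (hc : c.IsCycle)
    (h : IncidentPairwise R {e | e ∈ c.edges}) : (c.edges ++ c.edges.take 1).IsChain R := by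
  have hchain := isChain_edges_of_isTrail hc.isTrail h
  cases c with
  | nil => exact absurd rfl hc.ne_nil
  | @cons _ v _ huv q =>
    have hnotMem : s(u, v) ∉ q.edges := (Walk.cons_isCycle_iff q huv).1 hc |>.2
    have hne : q.edges ≠ [] := fun h => huv.ne (Walk.eq_of_length_eq_zero (by
      rw [← q.length_edges, h, List.length_nil])).symm
    refine List.isChain_append.2 ⟨hchain, List.isChain_singleton _, fun e he f hf => ?_⟩
    obtain rfl : s(u, v) = f := by simpa using hf
    rw [Walk.edges_cons, List.getLast?_cons_of_ne_nil hne] at he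
    have heq : e ∈ q.edges := List.mem_of_getLast? he
    exact h (by simp [heq]) (by simp) (ne_of_mem_of_not_mem heq hnotMem) u
      (end_mem_of_getLast?_edges he) (by simp)

theorem exists_ne_mem_edges_of_ncard_eq_two {p : G.Walk u v}
    (hx : (p.toSubgraph.neighborSet x).ncard = 2) :
    ∃ e ∈ p.edges, ∃ f ∈ p.edges, e ≠ f ∧ x ∈ e ∧ x ∈ f := by
  obtain ⟨y, z, hyz, hN⟩ := Set.ncard_eq_two.1 hx
  have mem_edges {t : V} (ht : t ∈ p.toSubgraph.neighborSet x) : s(x, t) ∈ p.edges :=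
    p.mem_edges_toSubgraph.1 ht
  exact ⟨s(x, y), mem_edges (by simp [hN]), s(x, z), mem_edges (by simp [hN]),
    fun h => hyz (Sym2.congr_right.1 h), by simp, by simp⟩

theorem exists_ne_mem_edges_of_isPath {p : G.Walk u v} (hp : p.IsPath) (hx : x ∈ p.support)
    (hxu : x ≠ u) (hxv : x ≠ v) : ∃ e ∈ p.edges, ∃ f ∈ p.edges, e ≠ f ∧ x ∈ e ∧ x ∈ f := by
  obtain ⟨i, rfl, hi⟩ := p.mem_support_iff_exists_getVert.1 hx
  refine exists_ne_mem_edges_of_ncard_eq_two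
    (hp.ncard_neighborSet_toSubgraph_internal_eq_two ?_ (hi.lt_of_ne ?_))
  · rintro rfl
    exact hxu p.getVert_zero
  · rintro rfl
    exact hxv p.getVert_length

theorem exists_ne_mem_edges_of_isCycle {c : G.Walk u u} (hc : c.IsCycle) (hx : x ∈ c.support) :
    ∃ e ∈ c.edges, ∃ f ∈ c.edges, e ≠ f ∧ x ∈ e ∧ x ∈ f :=
  exists_ne_mem_edges_of_ncard_eq_two (hc.ncard_neighborSet_toSubgraph_eq_two hx)

/-- Every edge of `G` that meets the walk `p` is an edge of `p`. -/
def IsSaturated (p : G.Walk u v) : Prop :=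
  ∀ x ∈ p.support, ∀ e ∈ G.edgeSet, x ∈ e → e ∈ p.edges

theorem IsSaturated.mem_support {p : G.Walk u v} (hp : IsSaturated p) (hx : G.Reachable u x) :
    x ∈ p.support := by
  rw [reachable_iff_reflTransGen] at hx
  induction hx with
  | refl => exact p.start_mem_support
  | tail _ hadj ih =>
    exact p.snd_mem_support_of_mem_edges (hp _ ih _ hadj (Sym2.mem_mk_left _ _))

theorem mem_supp_iff_of_adj (c : G.ConnectedComponent) (h : G.Adj u v) :
    u ∈ c.supp ↔ v ∈ c.supp := by
  rw [ConnectedComponent.mem_supp_iff, ConnectedComponent.mem_supp_iff,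
    ConnectedComponent.connectedComponentMk_eq_of_adj h]

theorem mem_supp_iff_reachable {c : G.ConnectedComponent} (hu : u ∈ c.supp) :
    x ∈ c.supp ↔ G.Reachable u x := by
  obtain rfl := (c.mem_supp_iff u).1 hu
  rw [ConnectedComponent.mem_supp_iff, ConnectedComponent.eq, reachable_comm]

end Walks

section Matchings

variable {I : PrefSys A B} {M N : Finset (A × B)} {a : A} {b : B}
  {u v x : A ⊕ B} {e : Sym2 (A ⊕ B)}

theorem graphOf_adj_inl_inr : (graphOf I).Adj (Sum.inl a) (Sum.inr b) ↔ I.E a b := by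
  simp [graphOf]

theorem exists_eq_of_mem_edgeSet_graphOf (he : e ∈ (graphOf I).edgeSet) :
    ∃ a b, e = s(Sum.inl a, Sum.inr b) := by
  induction e with
  | _ x y =>
    rcases x with a | b <;> rcases y with a' | b'
    · simp [graphOf] at he
    · exact ⟨a, b', rfl⟩
    · exact ⟨a', b, Sym2.eq_swap⟩
    · simp [graphOf] at he

theorem edgeInM_mk : edgeInM M s(Sum.inl a, Sum.inr b) ↔ (a, b) ∈ M := by
  simp [edgeInM]

theorem edgeInM_sdiff : edgeInM (N \ M) e ↔ edgeInM N e ∧ ¬ edgeInM M e := by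
  constructor
  · rintro ⟨a, b, h, rfl⟩
    simpa [edgeInM_mk] using h
  · rintro ⟨⟨a, b, h, rfl⟩, h'⟩
    simp_all [edgeInM_mk]

theorem not_unmatchedNode_iff : ¬ unmatchedNode M x ↔ ∃ e, edgeInM M e ∧ x ∈ e := by
  rcases x with a | b <;> simp [unmatchedNode, matchedA, matchedB, edgeInM]

instance : Std.Symm (altRel M) where
  symm _ _ h := by unfold altRel at *; tauto

theorem isMatching_iff_edgeInM :
    IsMatching I M ↔ (∀ e, edgeInM M e → e ∈ (graphOf I).edgeSet) ∧
      ∀ e f x, edgeInM M e → edgeInM M f → x ∈ e → x ∈ f → e = f := by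
  refine ⟨fun ⟨hE, hA, hB⟩ => ⟨?_, ?_⟩, fun ⟨hE, h⟩ => ⟨?_, ?_, ?_⟩⟩
  · rintro _ ⟨a, b, hab, rfl⟩
    exact graphOf_adj_inl_inr.2 (hE _ hab)
  · rintro _ _ (a | b) ⟨a₁, b₁, h₁, rfl⟩ ⟨a₂, b₂, h₂, rfl⟩ hx₁ hx₂
    · obtain ⟨rfl, rfl⟩ : a = a₁ ∧ a = a₂ := by simpa using And.intro hx₁ hx₂
      obtain rfl : b₁ = b₂ := (Prod.mk.inj (hA _ h₁ _ h₂ rfl)).2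
      rfl
    · obtain ⟨rfl, rfl⟩ : b = b₁ ∧ b = b₂ := by simpa using And.intro hx₁ hx₂
      obtain rfl : a₁ = a₂ := (Prod.mk.inj (hB _ h₁ _ h₂ rfl)).1
      rfl
  · rintro ⟨a, b⟩ hab
    exact graphOf_adj_inl_inr.1 (hE _ (edgeInM_mk.2 hab))
  · rintro ⟨a, b⟩ hab ⟨_, b'⟩ hab' rfl
    simpa using h _ _ (Sum.inl a) (edgeInM_mk.2 hab) (edgeInM_mk.2 hab') (by simp) (by simp)
  · rintro ⟨a, b⟩ hab ⟨a', _⟩ hab' rfl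
    simpa using h _ _ (Sum.inr b) (edgeInM_mk.2 hab) (edgeInM_mk.2 hab') (by simp) (by simp)

theorem two_dvd_wt : 2 ∣ wt I M a b := by
  unfold wt
  split_ifs <;> decide

variable [Fintype A] [Fintype B]

theorem sum_matched (hN : IsMatching I N) (f : A ⊕ B → ℤ) :
    ∑ x with ¬ unmatchedNode N x, f x = ∑ e ∈ N, (f (Sum.inl e.1) + f (Sum.inr e.2)) := by
  have hA : Finset.univ.filter (matchedA N) = N.image Prod.fst := by ext; simp [matchedA]
  have hB : Finset.univ.filter (matchedB N) = N.image Prod.snd := by ext; simp [matchedB]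
  rw [Finset.sum_filter, Fintype.sum_sum_type]
  simp only [unmatchedNode, not_not]
  rw [← Finset.sum_filter, ← Finset.sum_filter, hA, hB, Finset.sum_image hN.2.1,
    Finset.sum_image hN.2.2, Finset.sum_add_distrib]

theorem card_matched_mem (hN : IsMatching I N) (S : Set (A ⊕ B)) :
    Finset.card {x | ¬ unmatchedNode N x ∧ x ∈ S} =
      Finset.card {e ∈ N | Sum.inl e.1 ∈ S} + Finset.card {e ∈ N | Sum.inr e.2 ∈ S} := by
  have h := sum_matched hN fun x => if x ∈ S then 1 else 0
  rw [← Finset.sum_filter, Finset.filter_filter, Finset.sum_add_distrib, Finset.sum_boole,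
    Finset.sum_boole, Finset.sum_const, nsmul_one] at h
  exact_mod_cast h

theorem card_matched_mem_of_closed (hN : IsMatching I N) {S : Set (A ⊕ B)}
    (hS : ∀ e ∈ N, Sum.inl e.1 ∈ S ↔ Sum.inr e.2 ∈ S) :
    Finset.card {x | ¬ unmatchedNode N x ∧ x ∈ S} = 2 * Finset.card {e ∈ N | Sum.inl e.1 ∈ S} := by
  rw [card_matched_mem hN, two_mul, Finset.filter_congr hS]

theorem card_matched_mem_of_separated (hN : IsMatching I N) {S : Set (A ⊕ B)}
    (hab : (a, b) ∈ N) (ha : Sum.inl a ∈ S) (hb : Sum.inr b ∉ S)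
    (hS : ∀ e ∈ N, e ≠ (a, b) → (Sum.inl e.1 ∈ S ↔ Sum.inr e.2 ∈ S)) :
    Finset.card {x | ¬ unmatchedNode N x ∧ x ∈ S} =
      2 * Finset.card {e ∈ N | Sum.inr e.2 ∈ S} + 1 := by
  have hinsert : N.filter (fun e => Sum.inl e.1 ∈ S) =
      insert (a, b) (N.filter fun e => Sum.inr e.2 ∈ S) := by
    ext e
    by_cases he : e = (a, b)
    · simp [he, hab, ha]
    · simp +contextual [he, hS]
  rw [card_matched_mem hN, hinsert, Finset.card_insert_of_notMem (by simp [hb])]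
  lia

theorem card_matched (hN : IsMatching I N) :
    Finset.card {x | ¬ unmatchedNode N x} = 2 * N.card := by
  simpa using card_matched_mem_of_closed hN (S := Set.univ) (by simp)

theorem edgeInM_pairsOf {p : (graphOf I).Walk u v} : edgeInM (pairsOf I p) e ↔ e ∈ p.edges := by
  refine ⟨fun ⟨a, b, h, he⟩ => he ▸ (Finset.mem_filter.1 h).2, fun he => ?_⟩
  obtain ⟨a, b, rfl⟩ := exists_eq_of_mem_edgeSet_graphOf (p.edges_subset_edgeSet he)
  exact edgeInM_mk.2 (Finset.mem_filter.2 ⟨Finset.mem_univ _, he⟩)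

theorem wtWalk_eq_sum_pairsOf {p : (graphOf I).Walk u v} (hp : p.IsTrail) :
    wtWalk I M p = ∑ e ∈ pairsOf I p, wt I M e.1 e.2 := by
  rw [wtWalk, ← List.sum_toFinset _ hp.edges_nodup]
  have himage : p.edges.toFinset = (pairsOf I p).image fun e => s(Sum.inl e.1, Sum.inr e.2) := by
    ext e
    rw [List.mem_toFinset, ← edgeInM_pairsOf]
    simp [edgeInM, eq_comm]
  rw [himage, Finset.sum_image fun e _ f _ h => by simpa [Prod.ext_iff] using h]
  rfl

end Matchings

section Votes

variable {I : PrefSys A B} {M N : Finset (A × B)} {a : A} {b : B} {x : A ⊕ B}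

/-- The vote of the node `x` between `M` and `N`: `1` for `M`, `-1` for `N`, `0` for abstention. -/
def vote (I : PrefSys A B) (M N : Finset (A × B)) (x : A ⊕ B) : ℤ :=
  (if prefers I x M N then 1 else 0) - if prefers I x N M then 1 else 0

/-- The nodes that are matched in `M` but not in `N`. -/
def deserted [Fintype A] [Fintype B] (M N : Finset (A × B)) : Finset (A ⊕ B) :=
  {x | ¬ unmatchedNode M x ∧ unmatchedNode N x}

theorem prefersA_iff_of_mem_left (hM : IsMatching I M) (h : (a, b) ∈ M) :
    prefersA I a M N ↔ ¬ matchedA N a ∨ ∃ b', (a, b') ∈ N ∧ I.prefA a b b' := by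
  refine ⟨fun ⟨b₁, hb₁, h₁⟩ => ?_, fun h₁ => ⟨b, h, h₁⟩⟩
  obtain rfl : b₁ = b := (Prod.mk.inj (hM.2.1 _ hb₁ _ h rfl)).2
  exact h₁

theorem prefersB_iff_of_mem_left (hM : IsMatching I M) (h : (a, b) ∈ M) :
    prefersB I b M N ↔ ¬ matchedB N b ∨ ∃ a', (a', b) ∈ N ∧ I.prefB b a a' := by
  refine ⟨fun ⟨a₁, ha₁, h₁⟩ => ?_, fun h₁ => ⟨a, h, h₁⟩⟩
  obtain rfl : a₁ = a := (Prod.mk.inj (hM.2.2 _ ha₁ _ h rfl)).1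
  exact h₁

theorem prefersA_iff_of_mem_right (hN : IsMatching I N) (h : (a, b) ∈ N) :
    prefersA I a M N ↔ ∃ b', (a, b') ∈ M ∧ I.prefA a b' b := by
  refine exists_congr fun b' => and_congr_right fun _ => ⟨?_, fun h₁ => .inr ⟨b, h, h₁⟩⟩
  rintro (h₁ | ⟨b₁, hb₁, h₁⟩)
  · exact absurd ⟨b, h⟩ h₁
  · obtain rfl : b₁ = b := (Prod.mk.inj (hN.2.1 _ hb₁ _ h rfl)).2
    exact h₁

theorem prefersB_iff_of_mem_right (hN : IsMatching I N) (h : (a, b) ∈ N) :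
    prefersB I b M N ↔ ∃ a', (a', b) ∈ M ∧ I.prefB b a' a := by
  refine exists_congr fun a' => and_congr_right fun _ => ⟨?_, fun h₁ => .inr ⟨a, h, h₁⟩⟩
  rintro (h₁ | ⟨a₁, ha₁, h₁⟩)
  · exact absurd ⟨a, h⟩ h₁
  · obtain rfl : a₁ = a := (Prod.mk.inj (hN.2.2 _ ha₁ _ h rfl)).1
    exact h₁

theorem not_prefersA_of_mem (hI : I.IsValid) (hN : IsMatching I N) (hM : IsMatching I M)
    (h : (a, b) ∈ N) (h' : (a, b) ∈ M) : ¬ prefersA I a M N := by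
  rw [prefersA_iff_of_mem_right hN h]
  rintro ⟨b', hb', hlt⟩
  obtain rfl : b' = b := (Prod.mk.inj (hM.2.1 _ hb' _ h' rfl)).2
  exact hI.1 _ _ hlt

theorem not_prefersB_of_mem (hI : I.IsValid) (hN : IsMatching I N) (hM : IsMatching I M)
    (h : (a, b) ∈ N) (h' : (a, b) ∈ M) : ¬ prefersB I b M N := by
  rw [prefersB_iff_of_mem_right hN h]
  rintro ⟨a', ha', hlt⟩
  obtain rfl : a' = a := (Prod.mk.inj (hM.2.2 _ ha' _ h' rfl)).1
  exact hI.2.2.2.1 _ _ hlt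

theorem prefersA_iff_not_prefersA (hI : I.IsValid) (hM : IsMatching I M) (hN : IsMatching I N)
    (h : (a, b) ∈ N) (h' : (a, b) ∉ M) : prefersA I a M N ↔ ¬ prefersA I a N M := by
  obtain ⟨irrefl, trans, total, -⟩ := hI
  rw [prefersA_iff_of_mem_right hN h, prefersA_iff_of_mem_left hN h, not_or, not_not]
  refine ⟨fun ⟨b', hb', hlt⟩ => ⟨⟨b', hb'⟩, ?_⟩, fun ⟨⟨b', hb'⟩, hle⟩ => ⟨b', hb', ?_⟩⟩
  · rintro ⟨b'', hb'', hgt⟩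
    obtain rfl : b'' = b' := (Prod.mk.inj (hM.2.1 _ hb'' _ hb' rfl)).2
    exact irrefl _ _ (trans _ _ _ _ hlt hgt)
  · have hne : b' ≠ b := fun heq => h' (heq ▸ hb')
    exact (total a b' b (hM.1 _ hb') (hN.1 _ h) hne).resolve_right fun hgt => hle ⟨b', hb', hgt⟩

theorem prefersB_iff_not_prefersB (hI : I.IsValid) (hM : IsMatching I M) (hN : IsMatching I N)
    (h : (a, b) ∈ N) (h' : (a, b) ∉ M) : prefersB I b M N ↔ ¬ prefersB I b N M := by
  obtain ⟨-, -, -, irrefl, trans, total⟩ := hI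
  rw [prefersB_iff_of_mem_right hN h, prefersB_iff_of_mem_left hN h, not_or, not_not]
  refine ⟨fun ⟨a', ha', hlt⟩ => ⟨⟨a', ha'⟩, ?_⟩, fun ⟨⟨a', ha'⟩, hle⟩ => ⟨a', ha', ?_⟩⟩
  · rintro ⟨a'', ha'', hgt⟩
    obtain rfl : a'' = a' := (Prod.mk.inj (hM.2.2 _ ha'' _ ha' rfl)).1
    exact irrefl _ _ (trans _ _ _ _ hlt hgt)
  · have hne : a' ≠ a := fun heq => h' (heq ▸ ha')
    exact (total b a' a (hM.1 _ ha') (hN.1 _ h) hne).resolve_right fun hgt => hle ⟨a', ha', hgt⟩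

theorem wt_eq_of_mem (hN : IsMatching I N) (h : (a, b) ∈ N) :
    wt I M a b =
      if (a, b) ∉ M ∧ prefersA I a N M ∧ prefersB I b N M then 2
      else if prefersA I a M N ∧ prefersB I b M N then -2 else 0 := by
  simp only [wt, Blocks, hN.1 _ h, true_and, prefersA_iff_of_mem_left hN h,
    prefersB_iff_of_mem_left hN h, prefersA_iff_of_mem_right hN h, prefersB_iff_of_mem_right hN h]

theorem wt_eq_zero_of_mem (hI : I.IsValid) (hM : IsMatching I M) (h : (a, b) ∈ M) :
    wt I M a b = 0 := by
  simp [wt_eq_of_mem hM h, h, not_prefersA_of_mem hI hM hM h h]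

theorem vote_inl_add_vote_inr (hI : I.IsValid) (hM : IsMatching I M) (hN : IsMatching I N)
    (h : (a, b) ∈ N) : vote I M N (Sum.inl a) + vote I M N (Sum.inr b) = - wt I M a b := by
  rw [wt_eq_of_mem hN h]
  by_cases h' : (a, b) ∈ M
  · simp [vote, prefers, h', not_prefersA_of_mem hI hN hM h h', not_prefersB_of_mem hI hN hM h h',
      not_prefersA_of_mem hI hM hN h' h, not_prefersB_of_mem hI hM hN h' h]
  · by_cases hA : prefersA I a N M <;> by_cases hB : prefersB I b N M <;>
      simp [vote, prefers, h', hA, hB, prefersA_iff_not_prefersA hI hM hN h h',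
        prefersB_iff_not_prefersB hI hM hN h h']

theorem vote_of_unmatchedNode (h : unmatchedNode N x) :
    vote I M N x = if unmatchedNode M x then 0 else 1 := by
  rw [← ite_not]
  rcases x with a | b <;>
    simp_all [vote, prefers, prefersA, prefersB, unmatchedNode, matchedA, matchedB]

theorem Delta_eq_card_deserted_sub_sum_wt [Fintype A] [Fintype B] (hI : I.IsValid)
    (hM : IsMatching I M) (hN : IsMatching I N) :
    Delta I M N = (deserted M N).card - ∑ e ∈ N, wt I M e.1 e.2 := by
  have hvotes : Delta I M N = ∑ x, vote I M N x := by
    simp only [Delta, phi, vote, Finset.sum_sub_distrib, Finset.sum_boole]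
  have hmatched : ∑ x with ¬ unmatchedNode N x, vote I M N x = - ∑ e ∈ N, wt I M e.1 e.2 := by
    rw [sum_matched hN, ← Finset.sum_neg_distrib]
    exact Finset.sum_congr rfl fun e he => vote_inl_add_vote_inr hI hM hN he
  have hunmatched : ∑ x with unmatchedNode N x, vote I M N x = (deserted M N).card := by
    rw [Finset.sum_congr rfl fun x hx => vote_of_unmatchedNode (Finset.mem_filter.1 hx).2]
    simp [deserted, Finset.sum_ite, Finset.filter_filter, and_comm]
  rw [hvotes, ← Finset.sum_filter_add_sum_filter_not _ (unmatchedNode N), hmatched, hunmatched,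
    sub_eq_add_neg]

end Votes

section Necessity

variable {I : PrefSys A B} {M P : Finset (A × B)} {e : Sym2 (A ⊕ B)} {u v w : A ⊕ B}

/-- The matching obtained from `M` by forcing in the edges of `P`: an edge of `M` survives if it is
disjoint from all edges of `P`. -/
def exchange (M P : Finset (A × B)) : Finset (A × B) :=
  P ∪ {e ∈ M | unmatchedNode P (Sum.inl e.1) ∧ unmatchedNode P (Sum.inr e.2)}

theorem edgeInM_exchange :
    edgeInM (exchange M P) e ↔ edgeInM P e ∨ edgeInM M e ∧ ∀ x ∈ e, unmatchedNode P x := by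
  constructor
  · rintro ⟨a, b, h, rfl⟩
    simpa [exchange, edgeInM_mk] using h
  · rintro (⟨a, b, h, rfl⟩ | ⟨⟨a, b, h, rfl⟩, h'⟩)
    · simp [exchange, edgeInM_mk, h]
    · simp_all [exchange, edgeInM_mk]

theorem isMatching_exchange (hM : IsMatching I M) (hP : IsMatching I P) :
    IsMatching I (exchange M P) := by
  rw [isMatching_iff_edgeInM] at *
  have hdisj {e f : Sym2 (A ⊕ B)} {x : A ⊕ B} (he : edgeInM P e) (hf : ∀ y ∈ f, unmatchedNode P y)
      (hxe : x ∈ e) (hxf : x ∈ f) : False :=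
    not_unmatchedNode_iff.2 ⟨e, he, hxe⟩ (hf x hxf)
  simp only [edgeInM_exchange]
  refine ⟨fun e he => he.elim (hP.1 e) fun he => hM.1 e he.1, fun e f x he hf hxe hxf => ?_⟩
  rcases he with he | he <;> rcases hf with hf | hf
  · exact hP.2 e f x he hf hxe hxf
  · exact (hdisj he hf.2 hxe hxf).elim
  · exact (hdisj hf he.2 hxf hxe).elim
  · exact hM.2 e f x he.1 hf.1 hxe hxf

theorem sum_wt_exchange (hI : I.IsValid) (hM : IsMatching I M) :
    ∑ e ∈ exchange M P, wt I M e.1 e.2 = ∑ e ∈ P, wt I M e.1 e.2 := by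
  refine (Finset.sum_subset Finset.subset_union_left fun e he heP => ?_).symm
  exact wt_eq_zero_of_mem hI hM (Finset.mem_filter.1 ((Finset.mem_union.1 he).resolve_left heP)).1

variable [Fintype A] [Fintype B]

theorem card_deserted_exchange_le_one (hM : IsMatching I M)
    (hw : ∀ e, edgeInM M e → ∀ x ∈ e, ∀ y ∈ e,
      unmatchedNode P x → ¬ unmatchedNode P y → w ∈ e) :
    (deserted M (exchange M P)).card ≤ 1 := by
  have exists_edge {x : A ⊕ B} (hx : x ∈ deserted M (exchange M P)) :
      ∃ e y, edgeInM M e ∧ e = s(x, y) ∧ unmatchedNode P x ∧ ¬ unmatchedNode P y := by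
    obtain ⟨hxM, hx⟩ := (Finset.mem_filter.1 hx).2
    obtain ⟨e, he, hxe⟩ := not_unmatchedNode_iff.1 hxM
    have hxP : unmatchedNode P x := by
      by_contra hxP
      obtain ⟨f, hf, hxf⟩ := not_unmatchedNode_iff.1 hxP
      exact not_unmatchedNode_iff.2 ⟨f, edgeInM_exchange.2 (.inl hf), hxf⟩ hx
    obtain ⟨y, hye, hyP⟩ : ∃ y ∈ e, ¬ unmatchedNode P y := by
      by_contra! h
      exact not_unmatchedNode_iff.2 ⟨e, edgeInM_exchange.2 (.inr ⟨he, h⟩), hxe⟩ hx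
    have hne : x ≠ y := fun h => hyP (h ▸ hxP)
    exact ⟨e, y, he, (Sym2.mem_and_mem_iff hne).1 ⟨hxe, hye⟩, hxP, hyP⟩
  refine Finset.card_le_one.2 fun x hx x' hx' => ?_
  obtain ⟨_, y, he, rfl, hxP, hyP⟩ := exists_edge hx
  obtain ⟨_, y', he', rfl, hxP', hyP'⟩ := exists_edge hx'
  have heq : s(x, y) = s(x', y') := (isMatching_iff_edgeInM.1 hM).2 _ _ w he he'
    (hw _ he x (by simp) y (by simp) hxP hyP) (hw _ he' x' (by simp) y' (by simp) hxP' hyP')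
  rcases Sym2.eq_iff.1 heq with ⟨h, -⟩ | ⟨rfl, -⟩
  · exact h
  · exact absurd hxP hyP'

theorem sum_wt_nonpos_of_card_deserted_le_one (hI : I.IsValid) (hM : IsPopularMaxMatching I M)
    {N : Finset (A × B)} (hN : IsMatching I N) (h : (deserted M N).card ≤ 1) :
    ∑ e ∈ N, wt I M e.1 e.2 ≤ 0 := by
  obtain ⟨⟨hMm, hMmax⟩, hpop⟩ := hM
  have hcard : 2 * M.card ≤ 2 * N.card + (deserted M N).card := by
    rw [← card_matched hMm, ← card_matched hN]
    refine (Finset.card_le_card fun x hx => ?_).trans (Finset.card_union_le _ _)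
    simp_all [deserted, em']
  have hΔ := hpop N ⟨hN, fun L hL => (hMmax L hL).trans (by lia)⟩
  rw [Delta_eq_card_deserted_sub_sum_wt hI hMm hN] at hΔ
  have heven : 2 ∣ ∑ e ∈ N, wt I M e.1 e.2 := Finset.dvd_sum fun _ _ => two_dvd_wt
  lia

theorem isMatching_pairsOf_sdiff {p : (graphOf I).Walk u v}
    (halt : IncidentPairwise (altRel M) {e | e ∈ p.edges}) : IsMatching I (pairsOf I p \ M) := by
  simp only [isMatching_iff_edgeInM, edgeInM_sdiff, edgeInM_pairsOf]
  refine ⟨fun e he => p.edges_subset_edgeSet he.1, fun e f x he hf hxe hxf => ?_⟩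
  by_contra hne
  exact he.2 ((halt he.1 hf.1 hne x hxe hxf).2 hf.2)

theorem mem_edge_of_partly_covered (hM : IsMatching I M) {p : (graphOf I).Walk u v}
    (halt : IncidentPairwise (altRel M) {e | e ∈ p.edges})
    (hw : ∀ x ∈ p.support, x ≠ w → ¬ unmatchedNode M x →
      ∃ e ∈ p.edges, ∃ f ∈ p.edges, e ≠ f ∧ x ∈ e ∧ x ∈ f)
    (he : edgeInM M e) {x y : A ⊕ B} (hx : x ∈ e) (hy : y ∈ e)
    (hxP : unmatchedNode (pairsOf I p \ M) x) (hyP : ¬ unmatchedNode (pairsOf I p \ M) y) :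
    w ∈ e := by
  have exists_mem_notMem {z : A ⊕ B} (hz : z ∈ p.support) (hzw : z ≠ w) (hze : z ∈ e) :
      ∃ f ∈ p.edges, ∃ g ∈ p.edges, z ∈ f ∧ z ∈ g ∧ edgeInM M f ∧ ¬ edgeInM M g := by
    obtain ⟨f, hf, g, hg, hne, hzf, hzg⟩ := hw z hz hzw (not_unmatchedNode_iff.2 ⟨e, he, hze⟩)
    have halt' := halt hf hg hne z hzf hzg
    by_cases hfM : edgeInM M f
    · exact ⟨f, hf, g, hg, hzf, hzg, hfM, halt'.1 hfM⟩
    · exact ⟨g, hg, f, hf, hzg, hzf, not_not.1 fun hgM => hfM (halt'.2 hgM), hfM⟩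
  simp only [not_unmatchedNode_iff, edgeInM_sdiff, edgeInM_pairsOf] at hyP
  obtain ⟨f, ⟨hf, -⟩, hyf⟩ := hyP
  by_cases hyw : y = w
  · exact hyw ▸ hy
  obtain ⟨g, hg, -, -, hyg, -, hgM, -⟩ :=
    exists_mem_notMem (p.mem_support_of_mem_edges hf hyf) hyw hy
  obtain rfl : g = e := (isMatching_iff_edgeInM.1 hM).2 _ _ y hgM he hyg hy
  by_contra hwe
  obtain ⟨-, -, g', hg', -, hxg', -, hgM'⟩ :=
    exists_mem_notMem (p.mem_support_of_mem_edges hg hx) (ne_of_mem_of_not_mem hx hwe) hx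
  exact not_unmatchedNode_iff.2
    ⟨g', edgeInM_sdiff.2 ⟨edgeInM_pairsOf.2 hg', hgM'⟩, hxg'⟩ hxP

theorem wtWalk_nonpos (hI : I.IsValid) (hM : IsPopularMaxMatching I M)
    {p : (graphOf I).Walk u v} (hp : p.IsTrail)
    (halt : IncidentPairwise (altRel M) {e | e ∈ p.edges})
    (hw : ∀ x ∈ p.support, x ≠ w → ¬ unmatchedNode M x →
      ∃ e ∈ p.edges, ∃ f ∈ p.edges, e ≠ f ∧ x ∈ e ∧ x ∈ f) :
    wtWalk I M p ≤ 0 := by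
  have hMm : IsMatching I M := hM.1.1
  have hP := isMatching_pairsOf_sdiff halt
  calc wtWalk I M p
      = ∑ e ∈ pairsOf I p, wt I M e.1 e.2 := wtWalk_eq_sum_pairsOf hp
    _ = ∑ e ∈ pairsOf I p \ M, wt I M e.1 e.2 :=
        (Finset.sum_subset Finset.sdiff_subset fun e he he' => wt_eq_zero_of_mem hI hMm
          (by simpa [he] using he')).symm
    _ = ∑ e ∈ exchange M (pairsOf I p \ M), wt I M e.1 e.2 := (sum_wt_exchange hI hMm).symm
    _ ≤ 0 := sum_wt_nonpos_of_card_deserted_le_one hI hM (isMatching_exchange hMm hP)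
        (card_deserted_exchange_le_one hMm fun e he x hx y hy hxP hyP =>
          mem_edge_of_partly_covered hMm halt hw he hx hy hxP hyP)

theorem wtWalk_nonpos_of_isAltPath (hI : I.IsValid) (hM : IsPopularMaxMatching I M)
    {p : (graphOf I).Walk u v} (hp : IsAltPath I M p)
    (hend : unmatchedNode M u ∨ unmatchedNode M v) : wtWalk I M p ≤ 0 := by
  obtain ⟨hp, hchain⟩ := hp
  have halt := incidentPairwise_edges_of_isPath hp hchain
  rcases hend with hu | hv
  · exact wtWalk_nonpos (w := v) hI hM hp.isTrail halt fun x hx hxv hxM =>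
      exists_ne_mem_edges_of_isPath hp hx (fun h => hxM (h ▸ hu)) hxv
  · exact wtWalk_nonpos (w := u) hI hM hp.isTrail halt fun x hx hxu hxM =>
      exists_ne_mem_edges_of_isPath hp hx hxu fun h => hxM (h ▸ hv)

theorem wtWalk_nonpos_of_isAltCycle (hI : I.IsValid) (hM : IsPopularMaxMatching I M)
    {c : (graphOf I).Walk u u} (hc : IsAltCycle I M c) : wtWalk I M c ≤ 0 := by
  obtain ⟨hc, hchain⟩ := hc
  exact wtWalk_nonpos (w := u) hI hM hc.isTrail (incidentPairwise_edges_of_isCycle hc hchain)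
    fun x hx _ _ => exists_ne_mem_edges_of_isCycle hc hx

end Necessity

section Sufficiency

open SimpleGraph

variable {I : PrefSys A B} {M N : Finset (A × B)} {a : A} {b : B} {e : Sym2 (A ⊕ B)}
  {u v x : A ⊕ B}

/-- The graph with edge set `M ∪ N` on the nodes of the instance. Its components are alternating
paths and cycles. -/
def unionGraph (M N : Finset (A × B)) : SimpleGraph (A ⊕ B) :=
  fromEdgeSet {e | edgeInM M e ∨ edgeInM N e}

theorem mem_edgeSet_unionGraph :
    e ∈ (unionGraph M N).edgeSet ↔ edgeInM M e ∨ edgeInM N e := by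
  rw [unionGraph, edgeSet_fromEdgeSet, Set.mem_sdiff, Set.mem_ofPred_eq, and_iff_left_iff_imp]
  rintro (⟨a, b, -, rfl⟩ | ⟨a, b, -, rfl⟩) <;> simp

theorem unionGraph_le_graphOf (hM : IsMatching I M) (hN : IsMatching I N) :
    unionGraph M N ≤ graphOf I := by
  refine edgeSet_subset_edgeSet.1 fun e he => ?_
  exact (mem_edgeSet_unionGraph.1 he).elim ((isMatching_iff_edgeInM.1 hM).1 e)
    ((isMatching_iff_edgeInM.1 hN).1 e)

theorem incidentPairwise_unionGraph (hM : IsMatching I M) (hN : IsMatching I N) :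
    IncidentPairwise (altRel M) (unionGraph M N).edgeSet := by
  intro e he f hf hne x hxe hxf
  rw [isMatching_iff_edgeInM] at hM hN
  rw [mem_edgeSet_unionGraph] at he hf
  refine ⟨fun heM hfM => hne (hM.2 e f x heM hfM hxe hxf), fun hfM => ?_⟩
  exact he.resolve_right fun heN => hne (hN.2 e f x heN (hf.resolve_left hfM) hxe hxf)

theorem eq_or_eq_of_mem_unionGraph (hM : IsMatching I M) (hN : IsMatching I N)
    {f g : Sym2 (A ⊕ B)} (he : e ∈ (unionGraph M N).edgeSet) (hf : f ∈ (unionGraph M N).edgeSet)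
    (hg : g ∈ (unionGraph M N).edgeSet) (hfg : f ≠ g) (hxe : x ∈ e) (hxf : x ∈ f) (hxg : x ∈ g) :
    e = f ∨ e = g := by
  by_contra! h
  have halt := incidentPairwise_unionGraph hM hN
  have hef := halt he hf h.1 x hxe hxf
  have heg := halt he hg h.2 x hxe hxg
  have hfg := halt hf hg hfg x hxf hxg
  unfold altRel at *
  tauto

theorem unionGraph_adj_of_mem_left (h : (a, b) ∈ M) :
    (unionGraph M N).Adj (Sum.inl a) (Sum.inr b) :=
  mem_edgeSet_unionGraph.2 (.inl (edgeInM_mk.2 h))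

theorem unionGraph_adj_of_mem_right (h : (a, b) ∈ N) :
    (unionGraph M N).Adj (Sum.inl a) (Sum.inr b) :=
  mem_edgeSet_unionGraph.2 (.inr (edgeInM_mk.2 h))

theorem isMatching_piecewise (hM : IsMatching I M) (hN : IsMatching I N) {S : Set (A ⊕ B)}
    (hSM : ∀ e ∈ M, Sum.inl e.1 ∈ S ↔ Sum.inr e.2 ∈ S)
    (hSN : ∀ e ∈ N, Sum.inl e.1 ∈ S ↔ Sum.inr e.2 ∈ S) :
    IsMatching I ({e ∈ M | Sum.inl e.1 ∉ S} ∪ {e ∈ N | Sum.inl e.1 ∈ S}) := by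
  obtain ⟨hME, hMA, hMB⟩ := hM
  obtain ⟨hNE, hNA, hNB⟩ := hN
  simp only [IsMatching, Finset.mem_union, Finset.mem_filter]
  refine ⟨fun e he => he.elim (fun h => hME e h.1) fun h => hNE e h.1, ?_, ?_⟩
  · rintro e (he | he) f (hf | hf) hef
    · exact hMA e he.1 f hf.1 hef
    · exact absurd (hef ▸ hf.2) he.2
    · exact absurd (hef ▸ he.2) hf.2
    · exact hNA e he.1 f hf.1 hef
  · rintro e (he | he) f (hf | hf) hef
    · exact hMB e he.1 f hf.1 hef
    · exact absurd ((hSM e he.1).2 (hef ▸ (hSN f hf.1).1 hf.2)) he.2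
    · exact absurd ((hSM f hf.1).2 (hef ▸ (hSN e he.1).1 he.2)) hf.2
    · exact hNB e he.1 f hf.1 hef

theorem isSaturated_of_isPath (hM : IsMatching I M) (hN : IsMatching I N)
    {p : (unionGraph M N).Walk u v} (hp : p.IsPath) (hu : unmatchedNode M u)
    (hv : unmatchedNode N v) : IsSaturated p := by
  intro x hx e he hxe
  have hstart {f : Sym2 (A ⊕ B)} (huf : u ∈ f) : ¬ edgeInM M f :=
    fun hf => not_unmatchedNode_iff.2 ⟨f, hf, huf⟩ hu
  have hend {f : Sym2 (A ⊕ B)} (hvf : v ∈ f) (hf : f ∈ (unionGraph M N).edgeSet) : edgeInM M f :=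
    (mem_edgeSet_unionGraph.1 hf).resolve_right fun hf => not_unmatchedNode_iff.2 ⟨f, hf, hvf⟩ hv
  by_cases hnil : p.Nil
  · obtain rfl : x = u := by simpa [Walk.nil_iff_support_eq.1 hnil] using hx
    exact (hstart hxe (hend (hnil.eq ▸ hxe) he)).elim
  obtain ⟨f, hf, hxf⟩ := (p.mem_support_iff_exists_mem_edges_of_not_nil hnil).1 hx
  have hf' := p.edges_subset_edgeSet hf
  have halt := incidentPairwise_unionGraph hM hN
  by_contra hep
  have hef := halt he hf' (ne_of_mem_of_not_mem hf hep).symm x hxe hxf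
  by_cases hxu : x = u
  · subst hxu
    exact hstart hxe (hef.2 (hstart hxf))
  by_cases hxv : x = v
  · subst hxv
    exact hef.1 (hend hxe he) (hend hxf hf')
  obtain ⟨f, hf, g, hg, hne, hxf, hxg⟩ := exists_ne_mem_edges_of_isPath hp hx hxu hxv
  rcases eq_or_eq_of_mem_unionGraph hM hN he (p.edges_subset_edgeSet hf) (p.edges_subset_edgeSet hg)
    hne hxe hxf hxg with rfl | rfl
  exacts [hep hf, hep hg]

theorem isSaturated_of_isCycle (hM : IsMatching I M) (hN : IsMatching I N)
    {p : (unionGraph M N).Walk u u} (hp : p.IsCycle) : IsSaturated p := by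
  intro x hx e he hxe
  obtain ⟨f, hf, g, hg, hne, hxf, hxg⟩ := exists_ne_mem_edges_of_isCycle hp hx
  rcases eq_or_eq_of_mem_unionGraph hM hN he (p.edges_subset_edgeSet hf) (p.edges_subset_edgeSet hg)
    hne hxe hxf hxg with rfl | rfl
  exacts [hf, hg]

/-- The total `wt_M`-weight of the edges of `N` in the component `c` of `M ∪ N`. -/
def componentWt (I : PrefSys A B) (M N : Finset (A × B))
    (c : (unionGraph M N).ConnectedComponent) : ℤ :=
  ∑ e ∈ N with Sum.inl e.1 ∈ c.supp, wt I M e.1 e.2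

theorem sum_componentWt [Fintype A] [Fintype B] :
    ∑ c, componentWt I M N c = ∑ e ∈ N, wt I M e.1 e.2 := by
  simp only [componentWt, ConnectedComponent.mem_supp_iff]
  exact Finset.sum_fiberwise N (fun e => (unionGraph M N).connectedComponentMk (Sum.inl e.1))
    fun e => wt I M e.1 e.2

theorem sum_wt_eq_componentWt (hI : I.IsValid) (hM : IsMatching I M) {P : Finset (A × B)}
    {c : (unionGraph M N).ConnectedComponent} (hNP : ∀ e ∈ N, Sum.inl e.1 ∈ c.supp → e ∈ P)
    (hP : ∀ e ∈ P, Sum.inl e.1 ∈ c.supp ∧ (e ∈ M ∨ e ∈ N)) :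
    ∑ e ∈ P, wt I M e.1 e.2 = componentWt I M N c := by
  refine (Finset.sum_subset (fun e he => ?_) fun e he he' => ?_).symm
  · obtain ⟨heN, hec⟩ := Finset.mem_filter.1 he
    exact hNP e heN hec
  · obtain ⟨hec, heMN⟩ := hP e he
    exact wt_eq_zero_of_mem hI hM
      (heMN.resolve_right fun heN => he' (Finset.mem_filter.2 ⟨heN, hec⟩))

variable [Finite A] [Finite B]

theorem exists_unmatchedNode_of_closed (hM : IsMaximumMatching I M) (hN : IsMatching I N)
    {S : Set (A ⊕ B)} (hSM : ∀ e ∈ M, Sum.inl e.1 ∈ S ↔ Sum.inr e.2 ∈ S)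
    (hSN : ∀ e ∈ N, Sum.inl e.1 ∈ S ↔ Sum.inr e.2 ∈ S) (hx : x ∈ S) (hxM : unmatchedNode M x) :
    ∃ y ∈ S, unmatchedNode N y := by
  have := Fintype.ofFinite A
  have := Fintype.ofFinite B
  by_contra! hSmatched
  have hlt : Finset.card {y | ¬ unmatchedNode M y ∧ y ∈ S} <
      Finset.card {y | ¬ unmatchedNode N y ∧ y ∈ S} := by
    refine Finset.card_lt_card ((Finset.ssubset_iff_of_subset fun y hy => ?_).2 ⟨x, ?_, ?_⟩)
    · obtain ⟨-, -, hyS⟩ := Finset.mem_filter.1 hy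
      simp [hSmatched y hyS, hyS]
    · simp [hSmatched x hx, hx]
    · simp [hxM]
  have hmax := hM.2 _ (isMatching_piecewise hM.1 hN hSM hSN)
  have hdisj : Disjoint {e ∈ M | Sum.inl e.1 ∉ S} {e ∈ N | Sum.inl e.1 ∈ S} :=
    Finset.disjoint_left.2 fun e he he' => (Finset.mem_filter.1 he).2 (Finset.mem_filter.1 he').2
  rw [Finset.card_union_of_disjoint hdisj,
    ← Finset.card_filter_add_card_filter_not (s := M) (fun e => Sum.inl e.1 ∈ S)] at hmax
  rw [card_matched_mem_of_closed hM.1 hSM, card_matched_mem_of_closed hN hSN] at hlt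
  lia

theorem exists_unmatchedNode_right (hM : IsMaximumMatching I M) (hN : IsMatching I N)
    {c : (unionGraph M N).ConnectedComponent} (hx : x ∈ c.supp) (hxM : unmatchedNode M x) :
    ∃ y ∈ c.supp, unmatchedNode N y :=
  exists_unmatchedNode_of_closed hM hN
    (fun _ he => mem_supp_iff_of_adj c (unionGraph_adj_of_mem_left he))
    (fun _ he => mem_supp_iff_of_adj c (unionGraph_adj_of_mem_right he)) hx hxM

theorem exists_unmatchedNode_left (hM : IsMatching I M) (hN : IsMaximumMatching I N)
    {c : (unionGraph M N).ConnectedComponent} (hx : x ∈ c.supp) (hxN : unmatchedNode N x) :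
    ∃ y ∈ c.supp, unmatchedNode M y :=
  exists_unmatchedNode_of_closed hN hM
    (fun _ he => mem_supp_iff_of_adj c (unionGraph_adj_of_mem_right he))
    (fun _ he => mem_supp_iff_of_adj c (unionGraph_adj_of_mem_left he)) hx hxN

theorem wtWalk_mapLe_eq_componentWt (hI : I.IsValid) (hM : IsMatching I M)
    (hN : IsMatching I N) {c : (unionGraph M N).ConnectedComponent} (hu : u ∈ c.supp)
    {p : (unionGraph M N).Walk u v} (hp : p.IsTrail) (hsat : IsSaturated p) :
    wtWalk I M (p.mapLe (unionGraph_le_graphOf hM hN)) = componentWt I M N c := by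
  have := Fintype.ofFinite A
  have := Fintype.ofFinite B
  have mem_pairsOf (e : A × B) : e ∈ pairsOf I (p.mapLe (unionGraph_le_graphOf hM hN)) ↔
      s(Sum.inl e.1, Sum.inr e.2) ∈ p.edges := by
    rw [← edgeInM_mk, edgeInM_pairsOf, Walk.edges_mapLe_eq_edges]
  rw [wtWalk_eq_sum_pairsOf (hp.mapLe _)]
  refine sum_wt_eq_componentWt hI hM (fun e heN hec => ?_) fun e he => ?_
  · have hsupport := hsat.mem_support ((mem_supp_iff_reachable hu).1 hec)
    exact (mem_pairsOf e).2
      (hsat _ hsupport _ (unionGraph_adj_of_mem_right heN) (Sym2.mem_mk_left _ _))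
  · rw [mem_pairsOf] at he
    refine ⟨(mem_supp_iff_reachable hu).2 ⟨p.takeUntil _ (p.fst_mem_support_of_mem_edges he)⟩, ?_⟩
    exact (mem_edgeSet_unionGraph.1 (p.edges_subset_edgeSet he)).imp edgeInM_mk.1 edgeInM_mk.1

theorem exists_isAltPath_wtWalk_eq (hI : I.IsValid) (hM : IsMaximumMatching I M)
    (hN : IsMatching I N) {c : (unionGraph M N).ConnectedComponent} (hu : u ∈ c.supp)
    (huM : unmatchedNode M u) :
    ∃ (v : A ⊕ B) (p : (graphOf I).Walk u v), IsAltPath I M p ∧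
      wtWalk I M p = componentWt I M N c := by
  obtain ⟨v, hv, hvN⟩ := exists_unmatchedNode_right hM hN hu huM
  obtain ⟨p, hp⟩ := ((mem_supp_iff_reachable hu).1 hv).exists_isPath
  refine ⟨v, p.mapLe (unionGraph_le_graphOf hM.1 hN), ⟨hp.mapLe _, ?_⟩,
    wtWalk_mapLe_eq_componentWt hI hM.1 hN hu hp.isTrail (isSaturated_of_isPath hM.1 hN hp huM hvN)⟩
  rw [Walk.edges_mapLe_eq_edges]
  exact isChain_edges_of_isTrail hp.isTrail
    ((incidentPairwise_unionGraph hM.1 hN).mono p.edges_subset_edgeSet)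

theorem reachable_deleteEdges (hM : IsMatching I M) (hN : IsMatching I N) (hab : (a, b) ∈ N)
    (habM : (a, b) ∉ M)
    (hmatched : ∀ x, (unionGraph M N).Reachable (Sum.inl a) x →
      ¬ unmatchedNode M x ∧ ¬ unmatchedNode N x) :
    ((unionGraph M N).deleteEdges {s(Sum.inl a, Sum.inr b)}).Reachable
      (Sum.inl a) (Sum.inr b) := by
  have := Fintype.ofFinite A
  have := Fintype.ofFinite B
  -- Otherwise the component of `a` in `M ∪ N` without `(a, b)` would be perfectly matched by `M`,
  -- hence of even size, and perfectly matched by `N` up to the node `a`, hence of odd size.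
  set c := ((unionGraph M N).deleteEdges {s(Sum.inl a, Sum.inr b)}).connectedComponentMk
    (Sum.inl a)
  have ha : Sum.inl a ∈ c.supp := rfl
  by_contra hb
  rw [← mem_supp_iff_reachable ha] at hb
  have hclosed (e : A × B) (he : e ∈ M ∨ e ∈ N) (hne : e ≠ (a, b)) :
      Sum.inl e.1 ∈ c.supp ↔ Sum.inr e.2 ∈ c.supp :=
    mem_supp_iff_of_adj c (deleteEdges_adj.2
      ⟨he.elim unionGraph_adj_of_mem_left unionGraph_adj_of_mem_right,
        by simpa [Prod.ext_iff] using hne⟩)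
  have hmatched' (x : A ⊕ B) (hx : x ∈ c.supp) : ¬ unmatchedNode M x ∧ ¬ unmatchedNode N x :=
    hmatched x (((mem_supp_iff_reachable ha).1 hx).mono (deleteEdges_le _))
  have heven := card_matched_mem_of_closed hM fun e he =>
    hclosed e (.inl he) (ne_of_mem_of_not_mem he habM)
  have hodd := card_matched_mem_of_separated hN hab ha hb fun e he => hclosed e (.inr he)
  have hsame : Finset.card {x | ¬ unmatchedNode M x ∧ x ∈ c.supp} =
      Finset.card {x | ¬ unmatchedNode N x ∧ x ∈ c.supp} :=
    congrArg _ (Finset.filter_congr fun x _ => and_congr_left fun hx =>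
      iff_of_true (hmatched' x hx).1 (hmatched' x hx).2)
  lia

theorem exists_isAltCycle_wtWalk_eq (hI : I.IsValid) (hM : IsMatching I M)
    (hN : IsMaximumMatching I N) (hab : (a, b) ∈ N) (habM : (a, b) ∉ M)
    {c : (unionGraph M N).ConnectedComponent} (ha : Sum.inl a ∈ c.supp)
    (hc : ∀ x ∈ c.supp, ¬ unmatchedNode M x) :
    ∃ (v : A ⊕ B) (p : (graphOf I).Walk v v), IsAltCycle I M p ∧
      wtWalk I M p = componentWt I M N c := by
  have hcN : ∀ x ∈ c.supp, ¬ unmatchedNode N x := fun x hx hxN =>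
    let ⟨y, hy, hyM⟩ := exists_unmatchedNode_left hM hN hx hxN
    hc y hy hyM
  have hreach := reachable_deleteEdges hM hN.1 hab habM fun x hx =>
    have hx := (mem_supp_iff_reachable ha).2 hx
    ⟨hc x hx, hcN x hx⟩
  obtain ⟨v, p, hp, hmem⟩ := adj_and_reachable_delete_edges_iff_exists_cycle.1
    ⟨unionGraph_adj_of_mem_right hab, hreach⟩
  have hv : v ∈ c.supp := (mem_supp_iff_reachable ha).2
    (p.takeUntil _ (p.fst_mem_support_of_mem_edges hmem)).reachable.symm
  refine ⟨v, p.mapLe (unionGraph_le_graphOf hM hN.1), ⟨hp.mapLe _, ?_⟩,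
    wtWalk_mapLe_eq_componentWt hI hM hN.1 hv hp.isTrail (isSaturated_of_isCycle hM hN.1 hp)⟩
  rw [Walk.edges_mapLe_eq_edges]
  exact isChain_edges_append_take_one hp
    ((incidentPairwise_unionGraph hM hN.1).mono p.edges_subset_edgeSet)

theorem componentWt_nonpos (hI : I.IsValid) (hM : IsMaximumMatching I M)
    (hN : IsMaximumMatching I N)
    (hcycle : ∀ (v : A ⊕ B) (C : (graphOf I).Walk v v), IsAltCycle I M C → ¬ 0 < wtWalk I M C)
    (hpath : ∀ (u v : A ⊕ B) (p : (graphOf I).Walk u v), IsAltPath I M p →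
      (unmatchedNode M u ∨ unmatchedNode M v) → ¬ 0 < wtWalk I M p)
    (c : (unionGraph M N).ConnectedComponent) : componentWt I M N c ≤ 0 := by
  by_cases hc : ∃ u ∈ c.supp, unmatchedNode M u
  · obtain ⟨u, hu, huM⟩ := hc
    obtain ⟨v, p, hp, hwt⟩ := exists_isAltPath_wtWalk_eq hI hM hN.1 hu huM
    exact hwt ▸ not_lt.1 (hpath u v p hp (.inl huM))
  · push Not at hc
    by_contra! hpos
    obtain ⟨⟨a, b⟩, hab, hne⟩ := Finset.exists_ne_zero_of_sum_ne_zero hpos.ne'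
    obtain ⟨habN, hac⟩ := Finset.mem_filter.1 hab
    have habM : (a, b) ∉ M := fun h => hne (wt_eq_zero_of_mem hI hM.1 h)
    obtain ⟨v, C, hC, hwt⟩ := exists_isAltCycle_wtWalk_eq hI hM.1 hN habN habM hac hc
    exact hcycle v C hC (hwt ▸ hpos)

end Sufficiency

/-- A maximum matching `M` is a popular max-matching iff
(1) there is no alternating cycle `C` wrt `M` with `wt_M(C) > 0`, and
(2) there is no alternating path `p` wrt `M` with an endpoint unmatched in `M`
and `wt_M(p) > 0`. -/
theorem stmt0 {A B : Type*} [Fintype A] [Fintype B] [DecidableEq A] [DecidableEq B]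
    (I : PrefSys A B) (hI : I.IsValid) (M : Finset (A × B))
    (hM : IsMaximumMatching I M) :
    IsPopularMaxMatching I M ↔
      ((∀ (v : A ⊕ B) (C : (graphOf I).Walk v v),
          IsAltCycle I M C → ¬ 0 < wtWalk I M C) ∧
       (∀ (u v : A ⊕ B) (p : (graphOf I).Walk u v),
          IsAltPath I M p → (unmatchedNode M u ∨ unmatchedNode M v) →
          ¬ 0 < wtWalk I M p)) := by
  refine ⟨fun hpop => ⟨fun v C hC => ?_, fun u v p hp hend => ?_⟩,
    fun ⟨hcycle, hpath⟩ => ⟨hM, fun N hN => ?_⟩⟩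
  · exact not_lt.2 (wtWalk_nonpos_of_isAltCycle hI hpop hC)
  · exact not_lt.2 (wtWalk_nonpos_of_isAltPath hI hpop hp hend)
  · have hwt : ∑ e ∈ N, wt I M e.1 e.2 ≤ 0 := by
      rw [← sum_componentWt]
      exact Finset.sum_nonpos fun c _ => componentWt_nonpos hI hM hN hcycle hpath c
    rw [Delta_eq_card_deserted_sub_sum_wt hI hM.1 hN.1]
    lia

end PopMax
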